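/- A real number x is critical if and only if x is a rational number with x ≤ 0, or x = 1/n for some integer n ≥ 2, or x = n for some integer n ≥ 2. -/

import Mathlib

open Set

/-- `f` restricted to `{0,…,ℓ}` is a strictly increasing sequence from `0` to `n`. -/
def IsIncrSeq (n : ℤ) (ℓ : ℕ) (f : ℕ → ℤ) : Prop :=
  f 0 = 0 ∧ f ℓ = n ∧ ∀ m < ℓ, f m < f (m + 1)

/-- There is a path of the graph `G` from `a` to `b`: a finite strictly increasing
sequence of vertices from `a` to `b` all of whose consecutive pairs are edges of `G`. -/
def GReach (G : ℤ → ℤ → Prop) (a b : ℤ) : Prop :=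
  ∃ ℓ : ℕ, 1 ≤ ℓ ∧ ∃ f : ℕ → ℤ, f 0 = a ∧ f ℓ = b ∧
    ∀ m < ℓ, f m < f (m + 1) ∧ G (f m) (f (m + 1))

/-- `N_G(π)`: the number of consecutive pairs of the sequence that are edges of `G`. -/
noncomputable def nEdges (G : ℤ → ℤ → Prop) (ℓ : ℕ) (f : ℕ → ℤ) : ℕ :=
  {m : ℕ | m < ℓ ∧ G (f m) (f (m + 1))}.ncard

/-- `N̄_G(π)`: the number of consecutive pairs of the sequence that are *not* edges of `G`. -/
noncomputable def nNonEdges (G : ℤ → ℤ → Prop) (ℓ : ℕ) (f : ℕ → ℤ) : ℕ :=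
  {m : ℕ | m < ℓ ∧ ¬ G (f m) (f (m + 1))}.ncard

/-- The `x`-charge `N_G(π) + x·N̄_G(π)` of a sequence `π`. -/
noncomputable def chargeOf (x : ℝ) (G : ℤ → ℤ → Prop) (ℓ : ℕ) (f : ℕ → ℤ) : ℝ :=
  (nEdges G ℓ f : ℝ) + x * (nNonEdges G ℓ f : ℝ)

/-- A real number `x` is critical: for some `n ≥ 1` there are a graph `G ∈ ℌ_n` and two
maximal-`x`-charge increasing sequences from `0` to `n` with different numbers of
non-edges. -/
def Critical (x : ℝ) : Prop :=
  ∃ n : ℕ, 1 ≤ n ∧ ∃ G : ℤ → ℤ → Prop,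
    -- G is a directed graph on {0,…,n} whose edges (i,j) satisfy i < j
    (∀ i j : ℤ, G i j → 0 ≤ i ∧ i < j ∧ j ≤ (n : ℤ)) ∧
    -- G ∈ ℌ_n :
    (∀ j : ℤ, 0 < j → j < (n : ℤ) →
      -- (a) there is a path of G from 0 to n containing j
      (∃ ℓ : ℕ, 1 ≤ ℓ ∧ ∃ f : ℕ → ℤ, f 0 = 0 ∧ f ℓ = (n : ℤ) ∧
        (∀ m < ℓ, f m < f (m + 1) ∧ G (f m) (f (m + 1))) ∧ ∃ m ≤ ℓ, f m = j) ∧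
      -- (b) some 0 < i < n, i ≠ j, is not linked to j by a path of G
      (∃ i : ℤ, 0 < i ∧ i < (n : ℤ) ∧ i ≠ j ∧ ¬ GReach G (min i j) (max i j))) ∧
    -- two maximizers of the x-charge with different numbers of non-edges
    ∃ (ℓ₁ : ℕ) (f₁ : ℕ → ℤ) (ℓ₂ : ℕ) (f₂ : ℕ → ℤ),
      IsIncrSeq (n : ℤ) ℓ₁ f₁ ∧ IsIncrSeq (n : ℤ) ℓ₂ f₂ ∧
      chargeOf x G ℓ₁ f₁ = chargeOf x G ℓ₂ f₂ ∧
      (∀ (ℓ : ℕ) (f : ℕ → ℤ), IsIncrSeq (n : ℤ) ℓ f →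
        chargeOf x G ℓ f ≤ chargeOf x G ℓ₁ f₁) ∧
      nNonEdges G ℓ₁ f₁ ≠ nNonEdges G ℓ₂ f₂

inductive PN (G : ℤ → ℤ → Prop) (a : ℤ) : ℤ → ℕ → ℕ → Prop
  | nil : PN G a a 0 0
  | edge {b c : ℤ} {e f : ℕ} : PN G a b e f → b < c → G b c → PN G a c (e + 1) f
  | non {b c : ℤ} {e f : ℕ} : PN G a b e f → b < c → ¬ G b c → PN G a c e (f + 1)

lemma PN.le {G : ℤ → ℤ → Prop} {a b : ℤ} {e f : ℕ} (h : PN G a b e f) : a ≤ b := by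
  induction h with
  | nil => exact le_rfl
  | edge _ h1 _ ih => omega
  | non _ h1 _ ih => omega

lemma PN.trans {G : ℤ → ℤ → Prop} {a b c : ℤ} {e f e' f' : ℕ} (h : PN G a b e f)
    (h' : PN G b c e' f') : PN G a c (e + e') (f + f') := by
  induction h' with
  | nil => exact h
  | edge _ h1 h2 ih => exact PN.edge ih h1 h2
  | non _ h1 h2 ih => exact PN.non ih h1 h2

lemma PN.compl {G : ℤ → ℤ → Prop} {a b : ℤ} {e f : ℕ} (h : PN G a b e f) :
    PN (fun u v => ¬ G u v) a b f e := by
  induction h with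
  | nil => exact PN.nil
  | edge _ h1 h2 ih => exact PN.non ih h1 (by simpa using h2)
  | non _ h1 h2 ih => exact PN.edge ih h1 h2

lemma PN.of_compl {G : ℤ → ℤ → Prop} {a b : ℤ} {e f : ℕ}
    (h : PN (fun u v => ¬ G u v) a b f e) : PN G a b e f := by
  have := h.compl
  simpa using this

lemma PN.run {G : ℤ → ℤ → Prop} (g : ℕ → ℤ) (m : ℕ)
    (h : ∀ i < m, g i < g (i + 1) ∧ G (g i) (g (i + 1))) : PN G (g 0) (g m) m 0 := by
  induction m with
  | zero => exact PN.nil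
  | succ m ih =>
    exact PN.edge (ih fun i hi => h i (by omega)) (h m (by omega)).1 (h m (by omega)).2

lemma PN.runNon {G : ℤ → ℤ → Prop} (g : ℕ → ℤ) (m : ℕ)
    (h : ∀ i < m, g i < g (i + 1) ∧ ¬ G (g i) (g (i + 1))) : PN G (g 0) (g m) 0 m := by
  induction m with
  | zero => exact PN.nil
  | succ m ih =>
    exact PN.non (ih fun i hi => h i (by omega)) (h m (by omega)).1 (h m (by omega)).2

lemma cnt_fin (P : ℕ → Prop) (l : ℕ) : {m : ℕ | m < l ∧ P m}.Finite :=
  (Set.finite_lt_nat l).subset fun _ h => h.1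

lemma cnt_pos (P : ℕ → Prop) (l : ℕ) (h : P l) :
    {m : ℕ | m < l + 1 ∧ P m}.ncard = {m : ℕ | m < l ∧ P m}.ncard + 1 := by
  have : {m : ℕ | m < l + 1 ∧ P m} = insert l {m : ℕ | m < l ∧ P m} := by
    ext m
    simp only [Set.mem_ofPred_eq, Set.mem_insert_iff]
    constructor
    · rintro ⟨h1, h2⟩
      by_cases hm : m = l
      · exact Or.inl hm
      · exact Or.inr ⟨by omega, h2⟩
    · rintro (rfl | ⟨h1, h2⟩)
      · exact ⟨by omega, h⟩
      · exact ⟨by omega, h2⟩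
  rw [this, Set.ncard_insert_of_notMem (by simp) (cnt_fin P l)]

lemma cnt_neg (P : ℕ → Prop) (l : ℕ) (h : ¬ P l) :
    {m : ℕ | m < l + 1 ∧ P m}.ncard = {m : ℕ | m < l ∧ P m}.ncard := by
  congr 1
  ext m
  simp only [Set.mem_ofPred_eq]
  constructor
  · rintro ⟨h1, h2⟩
    have : m ≠ l := by rintro rfl; exact h h2
    exact ⟨by omega, h2⟩
  · rintro ⟨h1, h2⟩
    exact ⟨by omega, h2⟩

lemma PN_of_seq (G : ℤ → ℤ → Prop) (g : ℕ → ℤ) (l : ℕ) (h : ∀ m < l, g m < g (m + 1)) :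
    PN G (g 0) (g l) (nEdges G l g) (nNonEdges G l g) := by
  induction l with
  | zero => simpa [nEdges, nNonEdges] using PN.nil
  | succ l ih =>
    have ih' := ih fun m hm => h m (by omega)
    by_cases hG : G (g l) (g (l + 1))
    · have h1 : nEdges G (l + 1) g = nEdges G l g + 1 := cnt_pos _ l hG
      have h2 : nNonEdges G (l + 1) g = nNonEdges G l g :=
        cnt_neg (fun m => ¬ G (g m) (g (m + 1))) l (by simpa using hG)
      rw [h1, h2]
      exact PN.edge ih' (h l (by omega)) hG
    · have h1 : nEdges G (l + 1) g = nEdges G l g := 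
        cnt_neg (fun m => G (g m) (g (m + 1))) l hG
      have h2 : nNonEdges G (l + 1) g = nNonEdges G l g + 1 :=
        cnt_pos (fun m => ¬ G (g m) (g (m + 1))) l hG
      rw [h1, h2]
      exact PN.non ih' (h l (by omega)) hG

lemma seq_congr (G : ℤ → ℤ → Prop) (g g' : ℕ → ℤ) (l : ℕ) (h : ∀ m ≤ l, g m = g' m) :
    nEdges G l g = nEdges G l g' ∧ nNonEdges G l g = nNonEdges G l g' := by
  unfold nEdges nNonEdges
  constructor
  · congr 1
    ext m
    simp only [Set.mem_ofPred_eq]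
    refine and_congr_right fun hm => ?_
    rw [h m (by omega), h (m + 1) (by omega)]
  · congr 1
    ext m
    simp only [Set.mem_ofPred_eq]
    refine and_congr_right fun hm => ?_
    rw [h m (by omega), h (m + 1) (by omega)]

lemma seq_of_PN {G : ℤ → ℤ → Prop} {a b : ℤ} {e f : ℕ} (h : PN G a b e f) :
    ∃ (l : ℕ) (g : ℕ → ℤ), g 0 = a ∧ g l = b ∧ (∀ m < l, g m < g (m + 1)) ∧
      nEdges G l g = e ∧ nNonEdges G l g = f := by
  induction h with
  | nil => exact ⟨0, fun _ => a, rfl, rfl, by simp, by simp [nEdges], by simp [nNonEdges]⟩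
  | @edge b c e f _ h1 h2 ih =>
    obtain ⟨l, g, g0, gl, gm, ge, gf⟩ := ih
    let g' : ℕ → ℤ := fun m => if m ≤ l then g m else c
    have hg : ∀ m ≤ l, g m = g' m := fun m hm => by simp [g', hm]
    have hc : g' (l + 1) = c := by simp [g']
    obtain ⟨k1, k2⟩ := seq_congr G g g' l hg
    have hl : G (g' l) (g' (l + 1)) := by rw [hc, ← hg l le_rfl, gl]; exact h2
    refine ⟨l + 1, g', by rw [← hg 0 (by omega), g0], hc, ?_, ?_, ?_⟩
    · intro m hm
      by_cases hm' : m = l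
      · subst hm'; rw [hc, ← hg m le_rfl, gl]; exact h1
      · rw [← hg m (by omega), ← hg (m + 1) (by omega)]; exact gm m (by omega)
    · rw [← ge, k1]; exact cnt_pos _ l hl
    · rw [← gf, k2]; exact cnt_neg (fun m => ¬ G (g' m) (g' (m + 1))) l (by simpa using hl)
  | @non b c e f _ h1 h2 ih =>
    obtain ⟨l, g, g0, gl, gm, ge, gf⟩ := ih
    let g' : ℕ → ℤ := fun m => if m ≤ l then g m else c
    have hg : ∀ m ≤ l, g m = g' m := fun m hm => by simp [g', hm]
    have hc : g' (l + 1) = c := by simp [g']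
    obtain ⟨k1, k2⟩ := seq_congr G g g' l hg
    have hl : ¬ G (g' l) (g' (l + 1)) := by rw [hc, ← hg l le_rfl, gl]; exact h2
    refine ⟨l + 1, g', by rw [← hg 0 (by omega), g0], hc, ?_, ?_, ?_⟩
    · intro m hm
      by_cases hm' : m = l
      · subst hm'; rw [hc, ← hg m le_rfl, gl]; exact h1
      · rw [← hg m (by omega), ← hg (m + 1) (by omega)]; exact gm m (by omega)
    · rw [← ge, k1]; exact cnt_neg (fun m => G (g' m) (g' (m + 1))) l hl
    · rw [← gf, k2]; exact cnt_pos (fun m => ¬ G (g' m) (g' (m + 1))) l hl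

/-- optimality of a prefix -/
def Opt (x : ℝ) (G : ℤ → ℤ → Prop) (v : ℤ) (e f : ℕ) : Prop :=
  PN G 0 v e f ∧ ∀ e' f' : ℕ, PN G 0 v e' f' → (e' : ℝ) + x * f' ≤ e + x * f

lemma Opt.edge_inv {x : ℝ} {G : ℤ → ℤ → Prop} {b v : ℤ} {e f : ℕ}
    (hp : PN G 0 b e f) (hb : b < v) (hG : G b v)
    (hm : ∀ e' f' : ℕ, PN G 0 v e' f' → (e' : ℝ) + x * f' ≤ (e + 1 : ℕ) + x * f) :
    Opt x G b e f := by
  refine ⟨hp, fun e' f' h' => ?_⟩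
  have := hm _ _ (h'.edge hb hG)
  push_cast at this
  linarith

lemma Opt.non_inv {x : ℝ} {G : ℤ → ℤ → Prop} {b v : ℤ} {e f : ℕ}
    (hp : PN G 0 b e f) (hb : b < v) (hG : ¬ G b v)
    (hm : ∀ e' f' : ℕ, PN G 0 v e' f' → (e' : ℝ) + x * f' ≤ e + x * (f + 1 : ℕ)) :
    Opt x G b e f := by
  refine ⟨hp, fun e' f' h' => ?_⟩
  have := hm _ _ (h'.non hb hG)
  push_cast at this
  linarith

/-- An optimal last edge is short when `x > 1/2`-ish. -/
lemma edge_short {x : ℝ} (hx : 1 ≤ x) {G : ℤ → ℤ → Prop} {b u v : ℤ} {e f : ℕ}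
    (hp : PN G 0 b e f) (hbu : b < u) (huv : u < v)
    (hm : ∀ e' f' : ℕ, PN G 0 v e' f' → (e' : ℝ) + x * f' ≤ (e + 1 : ℕ) + x * f) : False := by
  by_cases h1 : G b u <;> by_cases h2 : G u v
  · have := hm _ _ ((hp.edge hbu h1).edge huv h2)
    push_cast at this; linarith
  · have := hm _ _ ((hp.edge hbu h1).non huv h2)
    push_cast at this; linarith
  · have := hm _ _ ((hp.non hbu h1).edge huv h2)
    push_cast at this; linarith
  · have := hm _ _ ((hp.non hbu h1).non huv h2)
    push_cast at this; linarith

/-- An optimal long last non-edge has edges inside (right part, left part). -/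
lemma non_long {x : ℝ} (hx : 1 ≤ x) {G : ℤ → ℤ → Prop} {b u v : ℤ} {e f : ℕ}
    (hp : PN G 0 b e f) (hbu : b < u) (huv : u < v)
    (hm : ∀ e' f' : ℕ, PN G 0 v e' f' → (e' : ℝ) + x * f' ≤ e + x * (f + 1 : ℕ)) :
    G b u ∧ G u v ∧ 2 ≤ x := by
  by_cases h1 : G b u <;> by_cases h2 : G u v
  · have := hm _ _ ((hp.edge hbu h1).edge huv h2)
    push_cast at this; exact ⟨h1, h2, by linarith⟩
  · have := hm _ _ ((hp.edge hbu h1).non huv h2)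
    push_cast at this; linarith
  · have := hm _ _ ((hp.non hbu h1).edge huv h2)
    push_cast at this; linarith
  · have := hm _ _ ((hp.non hbu h1).non huv h2)
    push_cast at this; linarith

lemma main_ind {x : ℝ} (hx : 1 < x) (hk : ∀ k : ℤ, x ≠ k) (G : ℤ → ℤ → Prop) (N : ℕ) :
    (∀ (v : ℤ) (e1 f1 e2 f2 : ℕ), v + v ≤ N → Opt x G v e1 f1 → Opt x G v e2 f2 → f1 = f2) ∧
    (∀ (c u v : ℤ) (e1 f1 e2 f2 : ℕ), u + v ≤ N → c < u → u < v → ¬ G c v →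
      Opt x G u e1 f1 → PN G 0 c e2 f2 → Opt x G v e2 (f2 + 1) → f1 = f2 ∨ f1 = f2 + 1) := by
  induction N using Nat.strong_induction_on with
  | _ N ih =>
  have hB : (∀ (c u v : ℤ) (e1 f1 e2 f2 : ℕ), u + v ≤ N → c < u → u < v → ¬ G c v →
      Opt x G u e1 f1 → PN G 0 c e2 f2 → Opt x G v e2 (f2 + 1) →
      f1 = f2 ∨ f1 = f2 + 1) := by
    intro c u v e1 f1 e2 f2 hN hcu huv hcv hu hc hv
    have hc0 := hc.le
    have hoc := Opt.non_inv hc (hcu.trans huv) hcv hv.2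
    obtain ⟨hp, hm⟩ := hu
    cases hp with
    | nil => omega
    | @edge b _ e _ hp hb hG =>
      have hob := Opt.edge_inv hp hb hG hm
      rcases lt_trichotomy b c with h | h | h
      · exact (edge_short hx.le hp h hcu hm).elim
      · subst h
        left
        exact (ih (b + b).toNat (by omega)).1 b _ _ _ _ (by omega) hob hoc
      · have := (ih (b + v).toNat (by have := hp.le; omega)).2 c b v e f1 e2 f2 (by omega) h (by omega) hcv
          hob hc hv
        exact this
    | @non b _ _ f hp hb hG =>
      have hob := Opt.non_inv hp hb hG hm
      rcases lt_trichotomy b c with h | h | h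
      · have := (ih (c + u).toNat (by omega)).2 b c u e2 f2 e1 f (by omega) h hcu hG
          hoc hp ⟨hp.non hb hG, hm⟩
        omega
      · subst h
        exact (hG (non_long hx.le hc hcu huv hv.2).1).elim
      · exfalso
        obtain ⟨h1, -, -⟩ := non_long hx.le hc h (hb.trans huv) hv.2
        obtain ⟨-, h2, -⟩ := non_long hx.le hc hcu huv hv.2
        have := hv.2 _ _ (((hc.edge h h1).non hb hG).edge huv h2)
        push_cast at this
        linarith
  refine ⟨?_, hB⟩
  have key : ∀ (v c c' : ℤ) (e1 f1 e2 f2 : ℕ), v + v ≤ N → c < c' → c' < v → ¬ G c v →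
      PN G 0 c e2 f2 → PN G 0 c' e1 f1 → G c' v → Opt x G v e2 (f2 + 1) →
      Opt x G v (e1 + 1) f1 → f1 = f2 + 1 := by
    intro v c c' e1 f1 e2 f2 hN h1 h2 hG hc hc' hG' hv hv'
    rcases hB c c' v e1 f1 e2 f2 (by omega) h1 h2 hG (Opt.edge_inv hc' h2 hG' hv'.2) hc hv
      with h | h
    · exfalso
      have a1 := hv.2 _ _ hv'.1
      have a2 := hv'.2 _ _ hv.1
      subst h
      apply hk ((e1 : ℤ) + 1 - e2)
      push_cast at *
      linarith
    · exact h
  intro v e1 f1 e2 f2 hN ⟨hp1, hm1⟩ ⟨hp2, hm2⟩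
  have k1 := hp1
  have k2 := hp2
  cases hp1 with
  | nil =>
    cases hp2 with
    | nil => rfl
    | edge h h' => have := h.le; omega
    | non h h' => have := h.le; omega
  | @edge b _ e _ hp hb hG =>
    have hl := hp.le
    cases hp2 with
    | nil => omega
    | @edge b' _ e' _ hp' hb' hG' =>
      rcases lt_trichotomy b b' with h | h | h
      · exact (edge_short hx.le hp h hb' hm1).elim
      · subst h
        exact (ih (b + b).toNat (by omega)).1 b _ _ _ _ (by omega)
          (Opt.edge_inv hp hb hG hm1) (Opt.edge_inv hp' hb' hG' hm2)
      · exact (edge_short hx.le hp' h hb hm2).elim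
    | @non b' _ _ f' hp' hb' hG' =>
      rcases lt_trichotomy b b' with h | h | h
      · exact (edge_short hx.le hp h hb' hm1).elim
      · subst h
        exact (hG' hG).elim
      · exact key v b' b e f1 e2 f' hN h hb hG' hp' hp hG ⟨k2, hm2⟩ ⟨k1, hm1⟩
  | @non b _ _ f hp hb hG =>
    have hl := hp.le
    cases hp2 with
    | nil => omega
    | @edge b' _ e' _ hp' hb' hG' =>
      rcases lt_trichotomy b b' with h | h | h
      · exact (key v b b' e' f2 e1 f hN h hb' hG hp hp' hG' ⟨k1, hm1⟩ ⟨k2, hm2⟩).symm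
      · subst h
        exact (hG hG').elim
      · exact (edge_short hx.le hp' h hb hm2).elim
    | @non b' _ _ f' hp' hb' hG' =>
      rcases lt_trichotomy b b' with h | h | h
      · exact (hG' (non_long hx.le hp h hb' hm1).2.1).elim
      · subst h
        have := (ih (b + b).toNat (by omega)).1 b _ _ _ _ (by omega)
          (Opt.non_inv hp hb hG hm1) (Opt.non_inv hp' hb' hG' hm2)
        omega
      · exact (hG (non_long hx.le hp' h hb hm2).2.1).elim

lemma one_ind (G : ℤ → ℤ → Prop) {v : ℤ} {e1 f1 : ℕ} (hp1 : PN G 0 v e1 f1) :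
    ∀ (e2 f2 : ℕ), (∀ e' f' : ℕ, PN G 0 v e' f' → (e' : ℝ) + (1 : ℝ) * f' ≤ e1 + (1 : ℝ) * f1) →
      Opt 1 G v e2 f2 → f1 = f2 := by
  induction hp1 with
  | nil =>
    rintro e2 f2 - ⟨hp2, -⟩
    cases hp2 with
    | nil => rfl
    | edge h h' => have := h.le; omega
    | non h h' => have := h.le; omega
  | @edge b v e f hp hb hG ih =>
    rintro e2 f2 hm1 ⟨hp2, hm2⟩
    have hl := hp.le
    cases hp2 with
    | nil => omega
    | @edge b' _ e' _ hp' hb' hG' =>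
      rcases lt_trichotomy b b' with h | h | h
      · exact (edge_short le_rfl hp h hb' hm1).elim
      · subst h
        exact ih _ _ (Opt.edge_inv hp hb hG hm1).2 (Opt.edge_inv hp' hb' hG' hm2)
      · exact (edge_short le_rfl hp' h hb hm2).elim
    | @non b' _ _ f' hp' hb' hG' =>
      rcases lt_trichotomy b b' with h | h | h
      · exact (edge_short le_rfl hp h hb' hm1).elim
      · subst h
        exact (hG' hG).elim
      · have := (non_long le_rfl hp' h hb hm2).2.2
        norm_num at this
  | @non b v e f hp hb hG ih =>
    rintro e2 f2 hm1 ⟨hp2, hm2⟩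
    have hl := hp.le
    cases hp2 with
    | nil => omega
    | @edge b' _ e' _ hp' hb' hG' =>
      rcases lt_trichotomy b b' with h | h | h
      · have := (non_long le_rfl hp h hb' hm1).2.2
        norm_num at this
      · subst h
        exact (hG hG').elim
      · exact (edge_short le_rfl hp' h hb hm2).elim
    | @non b' _ _ f' hp' hb' hG' =>
      rcases lt_trichotomy b b' with h | h | h
      · have := (non_long le_rfl hp h hb' hm1).2.2
        norm_num at this
      · subst h
        have := ih _ _ (Opt.non_inv hp hb hG hm1).2 (Opt.non_inv hp' hb' hG' hm2)
        omega
      · have := (non_long le_rfl hp' h hb hm2).2.2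
        norm_num at this

lemma necessity (x : ℝ) (h : Critical x) :
    (∃ q : ℚ, q ≤ 0 ∧ x = (q : ℝ)) ∨
       (∃ n : ℕ, 2 ≤ n ∧ x = 1 / (n : ℝ)) ∨
       (∃ n : ℕ, 2 ≤ n ∧ x = (n : ℝ)) := by
  obtain ⟨n, hn, G, -, -, l1, g1, l2, g2, ⟨a1, b1, c1⟩, ⟨a2, b2, c2⟩, heq, hmax, hne⟩ := h
  have p1 := PN_of_seq G g1 l1 c1
  have p2 := PN_of_seq G g2 l2 c2
  rw [a1, b1] at p1
  rw [a2, b2] at p2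
  unfold chargeOf at heq hmax
  generalize nEdges G l1 g1 = e1 at *
  generalize nEdges G l2 g2 = e2 at *
  generalize nNonEdges G l1 g1 = f1 at *
  generalize nNonEdges G l2 g2 = f2 at *
  have m1 : ∀ e' f' : ℕ, PN G 0 n e' f' → (e' : ℝ) + x * f' ≤ e1 + x * f1 := by
    intro e' f' hp
    obtain ⟨l, g, h0, hl, hm, he, hf⟩ := seq_of_PN hp
    have := hmax l g ⟨h0, hl, hm⟩
    rwa [he, hf] at this
  have m2 : ∀ e' f' : ℕ, PN G 0 n e' f' → (e' : ℝ) + x * f' ≤ e2 + x * f2 := by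
    intro e' f' hp
    rw [← heq]; exact m1 e' f' hp
  have hne' : (f1 : ℝ) - f2 ≠ 0 := by
    intro h
    apply hne
    have : (f1 : ℝ) = f2 := by linarith
    exact_mod_cast this
  rcases le_or_gt x 0 with hx0 | hx0
  · left
    have hxq : x = (((e2 : ℚ) - e1) / ((f1 : ℚ) - f2) : ℚ) := by
      push_cast
      rw [eq_div_iff hne']
      linarith
    refine ⟨_, ?_, hxq⟩
    rw [hxq] at hx0
    exact_mod_cast hx0
  · right
    rcases lt_trichotomy x 1 with hx1 | hx1 | hx1
    · left
      have hx1' : 1 < 1 / x := by rw [lt_div_iff₀ hx0]; linarith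
      by_cases hk : ∃ k : ℤ, 1 / x = k
      · obtain ⟨k, hk⟩ := hk
        rw [hk] at hx1'
        have hk1 : 1 < k := by exact_mod_cast hx1'
        lift k to ℕ using by omega
        refine ⟨k, by omega, ?_⟩
        rw [← Int.cast_natCast, ← hk]; simp
      · exfalso
        push Not at hk
        have tr : ∀ e f : ℕ, (f : ℝ) + 1 / x * e = (e + x * f) / x := by
          intro e f; field_simp; ring
        have hh := (main_ind hx1' hk (fun u v => ¬ G u v) (n + n)).1 n f1 e1 f2 e2
          (by push_cast; omega)
          ⟨p1.compl, fun f' e' hp => by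
            rw [tr, tr]; exact div_le_div_of_nonneg_right (m1 _ _ hp.of_compl) hx0.le⟩
          ⟨p2.compl, fun f' e' hp => by
            rw [tr, tr]; exact div_le_div_of_nonneg_right (m2 _ _ hp.of_compl) hx0.le⟩
        subst hh
        apply hne'
        have : x * ((f1 : ℝ) - f2) = 0 := by linarith
        exact (mul_eq_zero.mp this).resolve_left hx0.ne'
    · subst hx1
      exact (hne (one_ind G p1 e2 f2 m1 ⟨p2, m2⟩)).elim
    · right
      by_cases hk : ∃ k : ℤ, x = k
      · obtain ⟨k, hk⟩ := hk
        subst hk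
        have hk1 : 1 < k := by exact_mod_cast hx1
        lift k to ℕ using by omega
        exact ⟨k, by omega, by simp⟩
      · exfalso
        push Not at hk
        exact hne ((main_ind hx1 hk G (n + n)).1 n e1 f1 e2 f2 (by push_cast; omega)
          ⟨p1, m1⟩ ⟨p2, m2⟩)

lemma crit_of (n : ℕ) (hn : 1 ≤ n) (G : ℤ → ℤ → Prop) (h : ℤ → ℤ) (α β : ℤ) (hα : 0 < α)
    (hG : ∀ i j : ℤ, G i j → 0 ≤ i ∧ i < j ∧ j ≤ (n : ℤ))
    (h1 : ∀ i j, G i j → h i + α ≤ h j)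
    (h2 : ∀ i j : ℤ, 0 ≤ i → i < j → j ≤ n → ¬ G i j → h i + β ≤ h j)
    (h3 : ∀ j : ℤ, 0 < j → j < n → G 0 j ∧ G j n)
    (h4 : ∀ j : ℤ, 0 < j → j < (n : ℤ) →
      ∃ i : ℤ, 0 < i ∧ i < (n : ℤ) ∧ i ≠ j ∧ ¬ GReach G (min i j) (max i j))
    (e1 f1 e2 f2 : ℕ) (p1 : PN G 0 n e1 f1) (p2 : PN G 0 n e2 f2)
    (t1 : α * e1 + β * f1 = h n - h 0) (t2 : α * e2 + β * f2 = h n - h 0) (hne : f1 ≠ f2)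
    (x : ℝ) (hx : x = (β : ℝ) / α) : Critical x := by
  have hαR : (0 : ℝ) < α := by exact_mod_cast hα
  have key : ∀ (v : ℤ) (e f : ℕ), PN G 0 v e f → v ≤ n → α * e + β * f ≤ h v - h 0 := by
    intro v e f hp
    induction hp with
    | nil => intro _; simp
    | edge hp hb hg ih =>
      intro hv
      have := ih (by omega)
      have := h1 _ _ hg
      push_cast
      linarith
    | non hp hb hg ih =>
      intro hv
      have := ih (by omega)
      have := h2 _ _ hp.le hb hv hg
      push_cast
      linarith
  obtain ⟨l1, g1, a1, b1, c1, d1, k1⟩ := seq_of_PN p1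
  obtain ⟨l2, g2, a2, b2, c2, d2, k2⟩ := seq_of_PN p2
  have tr : ∀ e f : ℕ, (e : ℝ) + x * f = ((α * e + β * f : ℤ) : ℝ) / α := by
    intro e f
    rw [hx]; push_cast; field_simp
  refine ⟨n, hn, G, hG, ?_, l1, g1, l2, g2, ⟨a1, b1, c1⟩, ⟨a2, b2, c2⟩, ?_, ?_, ?_⟩
  · intro j hj0 hjn
    refine ⟨⟨2, by omega, fun m => if m = 0 then 0 else if m = 1 then j else n, by simp, by simp,
      ?_, 1, by omega, by simp⟩, h4 j hj0 hjn⟩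
    intro m hm
    obtain ⟨g0, gn⟩ := h3 j hj0 hjn
    interval_cases m
    · simpa using ⟨hj0, g0⟩
    · simpa using ⟨hjn, gn⟩
  · unfold chargeOf
    rw [d1, k1, d2, k2, tr, tr, t1, t2]
  · intro l g ⟨h0, hl, hm⟩
    have hp := PN_of_seq G g l hm
    rw [h0, hl] at hp
    have := key _ _ _ hp le_rfl
    unfold chargeOf
    rw [d1, k1, tr, tr, t1]
    apply div_le_div_of_nonneg_right _ hαR.le
    exact_mod_cast this
  · rw [k1, k2]; exact hne

lemma GReach.pot {G : ℤ → ℤ → Prop} {h : ℤ → ℤ} {α : ℤ} (hα : 0 < α)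
    (h1 : ∀ i j, G i j → h i + α ≤ h j) {a b : ℤ} (hr : GReach G a b) : h a + α ≤ h b := by
  obtain ⟨l, hl, f, f0, fl, hf⟩ := hr
  have : ∀ m, m + 1 ≤ l → h a + α ≤ h (f (m + 1)) := by
    intro m
    induction m with
    | zero => intro hm; rw [← f0]; exact h1 _ _ (hf 0 (by omega)).2
    | succ m ih =>
      intro hm
      have := ih (by omega)
      have := h1 _ _ (hf (m + 1) (by omega)).2
      linarith
  obtain ⟨m, rfl⟩ : ∃ m, l = m + 1 := ⟨l - 1, by omega⟩
  rw [← fl]; exact this m le_rfl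

lemma GReach.last {G : ℤ → ℤ → Prop} {a b : ℤ} (hr : GReach G a b) : ∃ c, a ≤ c ∧ G c b := by
  obtain ⟨l, hl, f, f0, fl, hf⟩ := hr
  obtain ⟨m, rfl⟩ : ∃ m, l = m + 1 := ⟨l - 1, by omega⟩
  have : ∀ k, k ≤ m → a ≤ f k := by
    intro k
    induction k with
    | zero => intro _; exact f0.ge
    | succ k ih => intro hk; have := ih (by omega); have := (hf k (by omega)).1; omega
  exact ⟨f m, this m le_rfl, by rw [← fl]; exact (hf m (by omega)).2⟩

lemma GReach.first {G : ℤ → ℤ → Prop} {a b : ℤ} (hr : GReach G a b) : ∃ c, c ≤ b ∧ G a c := by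
  obtain ⟨l, hl, f, f0, fl, hf⟩ := hr
  have : ∀ k, k + 1 ≤ l → f 1 ≤ f (k + 1) := by
    intro k
    induction k with
    | zero => intro _; exact le_rfl
    | succ k ih => intro hk; have := ih (by omega); have := (hf (k + 1) (by omega)).1; omega
  obtain ⟨m, rfl⟩ : ∃ m, l = m + 1 := ⟨l - 1, by omega⟩
  exact ⟨f 1, by rw [← fl]; exact this m le_rfl, by rw [← f0]; exact (hf 0 (by omega)).2⟩

lemma crit_nat (k : ℕ) (hk : 2 ≤ k) : Critical (k : ℝ) := by
  let G : ℤ → ℤ → Prop := fun u v => 0 ≤ u ∧ u < v ∧ v ≤ (k : ℤ) + 3 ∧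
    (u = 0 ∨ v = k + 3 ∨ (v ≤ k + 1 ∧ ¬ (u = 1 ∧ v = k + 1)))
  let h : ℤ → ℤ := fun t => if t ≤ k + 1 then t else if t = k + 2 then 2 * k + 1 else 2 * k + 2
  have hh : ∀ t, h t = if t ≤ k + 1 then t else if t = k + 2 then 2 * (k : ℤ) + 1 else 2 * k + 2 :=
    fun _ => rfl
  have head : PN G 0 1 1 0 := PN.edge PN.nil (by omega) ⟨by omega, by omega, by omega, by omega⟩
  have tail : PN G (k + 1) (k + 3 : ℕ) 1 1 :=
    PN.edge (PN.non (b := (k : ℤ) + 1) (c := k + 2) PN.nil (by omega)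
      (by rintro ⟨_, _, _, h⟩; omega)) (by push_cast; omega)
      ⟨by omega, by push_cast; omega, by push_cast; omega, by push_cast; omega⟩
  have mid1 : PN G 1 (k + 1) k 0 := by
    have := PN.run (G := G) (fun i => (i : ℤ) + 1) k (fun i hi => ⟨by push_cast; omega, by
      simp only [G]; push_cast; omega⟩)
    simpa using this
  have mid2 : PN G 1 (k + 1) 0 1 := PN.non PN.nil (by omega) (by rintro ⟨_, _, _, h⟩; omega)
  refine crit_of (k + 3) (by omega) G h 1 k (by omega) ?_ ?_ ?_ ?_ ?_ _ _ _ _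
    ((head.trans mid1).trans tail) ((head.trans mid2).trans tail) ?_ ?_ (by omega) _ (by simp)
  · rintro i j ⟨h1, h2, h3, -⟩; push_cast; omega
  · rintro i j ⟨h1, h2, h3, h4⟩
    rw [hh, hh]; split_ifs <;> omega
  · intro i j h1 h2 h3 h4
    push_cast at h3
    simp only [G] at h4
    rw [hh, hh]; split_ifs <;> omega
  · intro j h1 h2
    push_cast at h2
    push_cast
    exact ⟨⟨by omega, by omega, by omega, by omega⟩, ⟨by omega, by omega, by omega, by omega⟩⟩
  · intro j h1 h2
    push_cast at h2 ⊢
    by_cases hj : j = k + 2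
    · subst hj
      refine ⟨1, by omega, by omega, by omega, fun hr => ?_⟩
      rw [min_eq_left (by omega), max_eq_right (by omega)] at hr
      obtain ⟨c, hc, hg⟩ := hr.last
      simp only [G] at hg; omega
    · refine ⟨k + 2, by omega, by omega, by omega, fun hr => ?_⟩
      rw [min_eq_right (by omega), max_eq_left (by omega)] at hr
      obtain ⟨c, hc, hg⟩ := hr.last
      simp only [G] at hg; omega
  · rw [hh, hh]; push_cast; split_ifs <;> omega
  · rw [hh, hh]; push_cast; split_ifs <;> omega

lemma crit_inv (k : ℕ) (hk : 2 ≤ k) : Critical (1 / (k : ℝ)) := by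
  let G : ℤ → ℤ → Prop := fun u v => 0 ≤ u ∧ u < v ∧ v ≤ (k : ℤ) + 2 ∧
    (u = 0 ∨ v = k + 2 ∨ (u = 1 ∧ v = k + 1))
  let h : ℤ → ℤ := fun t => if t = 0 then 0 else if t ≤ k + 1 then k + t - 1 else 3 * k
  have hh : ∀ t, h t = if t = 0 then 0 else if t ≤ k + 1 then (k : ℤ) + t - 1 else 3 * k :=
    fun _ => rfl
  have head : PN G 0 1 1 0 := PN.edge PN.nil (by omega) ⟨by omega, by omega, by omega, by omega⟩
  have tail : PN G (k + 1) (k + 2 : ℕ) 1 0 :=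
    PN.edge PN.nil (by push_cast; omega)
      ⟨by omega, by push_cast; omega, by push_cast; omega, by push_cast; omega⟩
  have mid1 : PN G 1 (k + 1) 0 k := by
    have := PN.runNon (G := G) (fun i => (i : ℤ) + 1) k (fun i hi => ⟨by push_cast; omega, by
      simp only [G]; push_cast; omega⟩)
    simpa using this
  have mid2 : PN G 1 (k + 1) 1 0 := PN.edge PN.nil (by omega)
    ⟨by omega, by omega, by omega, by omega⟩
  refine crit_of (k + 2) (by omega) G h k 1 (by omega) ?_ ?_ ?_ ?_ ?_ _ _ _ _
    ((head.trans mid1).trans tail) ((head.trans mid2).trans tail) ?_ ?_ (by omega) _ (by simp)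
  · rintro i j ⟨h1, h2, h3, -⟩; push_cast; omega
  · rintro i j ⟨h1, h2, h3, h4⟩
    rw [hh, hh]; split_ifs <;> omega
  · intro i j h1 h2 h3 h4
    push_cast at h3
    simp only [G] at h4
    rw [hh, hh]; split_ifs <;> omega
  · intro j h1 h2
    push_cast at h2
    push_cast
    exact ⟨⟨by omega, by omega, by omega, by omega⟩, ⟨by omega, by omega, by omega, by omega⟩⟩
  · intro j h1 h2
    push_cast at h2 ⊢
    by_cases hj : j = 1
    · subst hj
      refine ⟨2, by omega, by omega, by omega, fun hr => ?_⟩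
      rw [min_eq_right (by omega), max_eq_left (by omega)] at hr
      obtain ⟨c, hc, hg⟩ := hr.last
      simp only [G] at hg; omega
    · by_cases hj2 : j = k + 1
      · subst hj2
        refine ⟨2, by omega, by omega, by omega, fun hr => ?_⟩
        rw [min_eq_left (by omega), max_eq_right (by omega)] at hr
        obtain ⟨c, hc, hg⟩ := hr.first
        simp only [G] at hg; omega
      · refine ⟨1, by omega, by omega, by omega, fun hr => ?_⟩
        rw [min_eq_left (by omega), max_eq_right (by omega)] at hr
        obtain ⟨c, hc, hg⟩ := hr.last
        simp only [G] at hg; omega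
  · rw [hh, hh]; push_cast; split_ifs <;> omega
  · rw [hh, hh]; push_cast; split_ifs <;> omega

lemma crit_rat (p q : ℕ) (hq : 2 ≤ q) : Critical (-(p : ℝ) / q) := by
  obtain ⟨d, hd⟩ : ∃ d : ℕ, d + p = q * (p + 1) := ⟨q * (p + 1) - p, by
    have : p ≤ q * (p + 1) := by nlinarith
    omega⟩
  have hd0 : 0 < d := by nlinarith
  obtain ⟨W, hW⟩ : ∃ W : ℕ, W = q * (p + 1) := ⟨_, rfl⟩
  have hdW : d + p = W := by omega
  have hW1 : 1 ≤ W := by nlinarith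
  have hWZ : (W : ℤ) = q * (p + 1) := by exact_mod_cast hW
  obtain ⟨n, hn⟩ : ∃ n : ℕ, n = (q + 1) * (W + 1) + 1 := ⟨_, rfl⟩
  have hnZ : (n : ℤ) = (q + 1) * (W + 1) + 1 := by exact_mod_cast hn
  let s : ℤ → ℤ := fun t => d * (t / (W + 1)) + t % (W + 1)
  have hs : ∀ k r : ℤ, 0 ≤ r → r ≤ W → s ((W + 1) * k + r) = d * k + r := by
    intro k r h0 h1
    simp only [s]
    rw [Int.mul_add_emod_self_left, Int.emod_eq_of_lt h0 (by omega),
      Int.mul_add_ediv_left _ _ (by omega), Int.ediv_eq_zero_of_lt h0 (by omega)]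
    ring
  have dec : ∀ t : ℤ, 1 ≤ t → t < n → ∃ k r : ℤ, 0 ≤ k ∧ k ≤ q ∧ 0 ≤ r ∧ r ≤ W ∧
      t = 1 + ((W + 1) * k + r) := by
    intro t h1 h2
    refine ⟨(t - 1) / (W + 1), (t - 1) % (W + 1), ?_, ?_, ?_, ?_, ?_⟩
    · exact Int.ediv_nonneg (by omega) (by omega)
    · apply Int.le_of_lt_add_one
      rw [Int.ediv_lt_iff_lt_mul (by omega)]
      omega
    · exact Int.emod_nonneg _ (by omega)
    · have := Int.emod_lt_of_pos (t - 1) (b := (W : ℤ) + 1) (by omega)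
      omega
    · rw [Int.mul_ediv_add_emod]; ring
  have ran : ∀ k r : ℤ, 0 ≤ k → k ≤ q → 0 ≤ r → r ≤ W →
      1 ≤ 1 + ((W + 1) * k + r) ∧ 1 + ((W + 1) * k + r) < n := by
    intro k r h0 h1 h2 h3
    constructor
    · have : 0 ≤ ((W : ℤ) + 1) * k := by positivity
      omega
    · have : ((W : ℤ) + 1) * k ≤ (W + 1) * q := by gcongr
      rw [hnZ]; linarith
  let h : ℤ → ℤ := fun t => if t ≤ 0 then 0 else if t < n then q + s (t - 1) else
    2 * q + q * d + W
  have h00 : h 0 = 0 := rfl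
  have hnn : h n = 2 * q + q * d + W := by
    simp only [h]
    rw [if_neg (by omega), if_neg (by omega)]
  have hin : ∀ k r : ℤ, 0 ≤ k → k ≤ q → 0 ≤ r → r ≤ W →
      h (1 + ((W + 1) * k + r)) = q + (d * k + r) := by
    intro k r h0 h1 h2 h3
    obtain ⟨a, b⟩ := ran k r h0 h1 h2 h3
    simp only [h]
    rw [if_neg (by omega), if_pos b, add_sub_cancel_left, hs k r h2 h3]
  have hlow : ∀ t : ℤ, 1 ≤ t → t < n → (q : ℤ) ≤ h t ∧ h t + q ≤ h n := by
    intro t h1 h2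
    obtain ⟨k, r, a, b, c, e, rfl⟩ := dec t h1 h2
    rw [hin k r a b c e, hnn]
    have : 0 ≤ (d : ℤ) * k := by positivity
    have : (d : ℤ) * k ≤ d * q := by gcongr
    constructor <;> linarith
  let G : ℤ → ℤ → Prop := fun u v => 0 ≤ u ∧ u < v ∧ v ≤ n ∧ h u + q ≤ h v
  have hedge : ∀ k r k' r' : ℤ, 0 ≤ k → k ≤ q → 0 ≤ r → r ≤ W → 0 ≤ k' → k' ≤ q → 0 ≤ r' →
      r' ≤ W → (W + 1) * k + r < (W + 1) * k' + r' → d * k + r + q ≤ d * k' + r' →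
      1 + ((W + 1) * k + r) < 1 + ((W + 1) * k' + r') ∧
      G (1 + ((W + 1) * k + r)) (1 + ((W + 1) * k' + r')) := by
    intro k r k' r' a b c e a' b' c' e' hl hg
    refine ⟨by omega, ?_, by omega, ?_, ?_⟩
    · have := (ran k r a b c e).1; omega
    · exact (ran k' r' a' b' c' e').2.le
    · rw [hin k r a b c e, hin k' r' a' b' c' e']; linarith
  have h3 : ∀ j : ℤ, 0 < j → j < n → G 0 j ∧ G j n := by
    intro j hj1 hj2
    obtain ⟨a, b⟩ := hlow j (by omega) hj2
    exact ⟨⟨le_rfl, hj1, hj2.le, by rw [h00]; omega⟩, ⟨hj1.le, hj2, le_rfl, b⟩⟩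
  have hn1 : (1 : ℤ) < n := by rw [hnZ]; nlinarith
  have head : PN G 0 1 1 0 := PN.edge PN.nil (by omega) (h3 1 (by omega) hn1).1
  have climb : ∀ k : ℤ, 0 ≤ k → k ≤ q →
      PN G (1 + ((W + 1) * k + 0)) (1 + ((W + 1) * k + W)) (p + 1) 0 := by
    intro k hk0 hk1
    have := PN.run (G := G) (fun i => 1 + ((W + 1) * k + q * i)) (p + 1) (fun i hi => by
      have hi' : (i : ℤ) + 1 ≤ p + 1 := by exact_mod_cast hi
      have e1 : (q : ℤ) * (i + 1) ≤ W := by rw [hWZ]; gcongr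
      have e0 : 0 ≤ (q : ℤ) * i := by positivity
      apply hedge <;> first | assumption | skip
      all_goals push_cast
      all_goals linarith)
    push_cast at this
    rw [← hWZ, mul_zero] at this
    exact this
  have tail : PN G (1 + ((W + 1) * q + 0)) n (p + 1 + 1) 0 := by
    obtain ⟨a, b⟩ := ran q W (by omega) le_rfl (by omega) le_rfl
    exact PN.edge (climb q (by omega) le_rfl) b (h3 _ (by omega) b).2
  have path1 : PN G 1 (1 + ((W + 1) * q + 0)) d 0 := by
    have hdZ : (0 : ℤ) < d := by omega
    have := PN.run (G := G) (fun i => 1 + ((W + 1) * ((q * i : ℤ) / d) + (q * i : ℤ) % d)) d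
      (fun i hi => by
        have i1 : (i : ℤ) + 1 ≤ d := by exact_mod_cast hi
        have r1 := Int.emod_nonneg (q * i : ℤ) hdZ.ne'
        have r2 := Int.emod_lt_of_pos (q * i : ℤ) hdZ
        have r3 := Int.emod_nonneg (q * (i + 1 : ℕ) : ℤ) hdZ.ne'
        have r4 := Int.emod_lt_of_pos (q * (i + 1 : ℕ) : ℤ) hdZ
        have s1 := Int.mul_ediv_add_emod (q * i : ℤ) d
        have s2 := Int.mul_ediv_add_emod (q * (i + 1 : ℕ) : ℤ) d
        have d1 : 0 ≤ (q * i : ℤ) / d := Int.ediv_nonneg (by positivity) hdZ.le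
        have d2 : (q * i : ℤ) / d ≤ (q * (i + 1 : ℕ) : ℤ) / d :=
          Int.ediv_le_ediv hdZ (by push_cast; gcongr; omega)
        have d3 : (q * (i + 1 : ℕ) : ℤ) / d ≤ q := by
          apply Int.ediv_le_of_le_mul hdZ
          push_cast
          gcongr
        have t : (q * (i + 1 : ℕ) : ℤ) = q * i + q := by push_cast; ring
        generalize (q * i : ℤ) / d = k at *
        generalize (q * i : ℤ) % d = r at *
        generalize (q * (i + 1 : ℕ) : ℤ) / d = k' at *
        generalize (q * (i + 1 : ℕ) : ℤ) % d = r' at *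
        apply hedge <;> try omega
        rcases d2.lt_or_eq with hlt | heq
        · have : ((W : ℤ) + 1) * (k + 1) ≤ (W + 1) * k' := by gcongr; omega
          have : r < W + 1 := by omega
          linarith
        · subst heq
          omega)
    have z : ((q : ℤ) * d) / d = q := Int.mul_ediv_cancel _ hdZ.ne'
    simpa [z] using this
  have path2 : ∀ k : ℕ, k ≤ q → PN G 1 (1 + ((W + 1) * k + 0)) ((p + 1) * k) k := by
    intro k
    induction k with
    | zero => intro _; simpa using PN.nil
    | succ k ih =>
      intro hk
      have c := (ih (by omega)).trans (climb k (by omega) (by omega))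
      refine PN.non (b := 1 + ((W + 1) * k + W)) c (by push_cast; linarith) ?_
      rintro ⟨-, -, -, hg⟩
      rw [hin _ _ (by omega) (by omega) (by omega) (by omega),
        hin _ _ (by omega) (by omega) (by omega) (by omega)] at hg
      have : (d : ℤ) + p = W := by exact_mod_cast hdW
      push_cast at hg
      linarith
  have hdp : (d : ℤ) + p = q * (p + 1) := by exact_mod_cast hd
  refine crit_of n (by omega) G h q (-p) (by omega) ?_ ?_ ?_ h3 ?_ _ _ _ _
    ((head.trans path1).trans tail) ((head.trans (path2 q le_rfl)).trans tail) ?_ ?_ (by omega) _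
    (by push_cast; rfl)
  · rintro i j ⟨h1, h2, h3, -⟩; exact ⟨h1, h2, h3⟩
  · rintro i j ⟨-, -, -, h4⟩; exact h4
  · intro i j hi hij hj _
    rcases hi.eq_or_lt with rfl | hi
    · rw [h00]
      rcases hj.eq_or_lt with rfl | hj
      · rw [hnn]
        have : 0 ≤ (q : ℤ) * d := by positivity
        linarith
      · have := (hlow j (by omega) hj).1
        omega
    · rcases hj.eq_or_lt with rfl | hj
      · have := (hlow i (by omega) hij).2
        omega
      · obtain ⟨k, r, a, b, c, e, rfl⟩ := dec i (by omega) (by omega)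
        obtain ⟨k', r', a', b', c', e', rfl⟩ := dec j (by omega) (by omega)
        rw [hin k r a b c e, hin k' r' a' b' c' e']
        rcases lt_trichotomy k k' with hlt | heq | hgt
        · have : (d : ℤ) * (k + 1) ≤ d * k' := by gcongr; omega
          have : (d : ℤ) + p = W := by exact_mod_cast hdW
          linarith
        · subst heq
          linarith
        · have : ((W : ℤ) + 1) * (k' + 1) ≤ (W + 1) * k := by gcongr; omega
          linarith
  · intro j hj1 hj2
    obtain ⟨k, r, a, b, c, e, rfl⟩ := dec j (by omega) (by omega)
    have pot : ∀ u v, GReach G u v → h u + q ≤ h v := fun u v hr =>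
      GReach.pot (α := q) (by omega) (fun i j hg => hg.2.2.2) hr
    by_cases hr : r = W
    · obtain ⟨x1, x2⟩ := ran k (r - 1) a b (by omega) (by omega)
      refine ⟨_, by omega, x2, by omega, fun hr => ?_⟩
      rw [min_eq_left (by omega), max_eq_right (by omega)] at hr
      have := pot _ _ hr
      rw [hin k r a b c e, hin k (r - 1) a b (by omega) (by omega)] at this
      omega
    · obtain ⟨x1, x2⟩ := ran k (r + 1) a b (by omega) (by omega)
      refine ⟨_, by omega, x2, by omega, fun hr => ?_⟩
      rw [min_eq_right (by omega), max_eq_left (by omega)] at hr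
      have := pot _ _ hr
      rw [hin k r a b c e, hin k (r + 1) a b (by omega) (by omega)] at this
      omega
  · rw [hnn, h00, hWZ]; push_cast; ring
  · rw [hnn, h00, hWZ]; push_cast
    have : (d : ℤ) = q * (p + 1) - p := by linarith
    rw [this]; ring

/-- A real number `x` is critical if and only if `x` is a rational
number with `x ≤ 0`, or `x = 1/n` for some integer `n ≥ 2`, or `x = n` for some integer
`n ≥ 2`. -/
theorem stmt19 (x : ℝ) :
    Critical x ↔
      ((∃ q : ℚ, q ≤ 0 ∧ x = (q : ℝ)) ∨
       (∃ n : ℕ, 2 ≤ n ∧ x = 1 / (n : ℝ)) ∨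
       (∃ n : ℕ, 2 ≤ n ∧ x = (n : ℝ))) := by
  constructor
  · exact necessity x
  · rintro (⟨r, hr, rfl⟩ | ⟨n, hn, rfl⟩ | ⟨n, hn, rfl⟩)
    · have hd := r.den_pos
      obtain ⟨a, ha⟩ : ∃ a : ℕ, r.num = -(a : ℤ) :=
        ⟨(-r.num).toNat, by have := Rat.num_nonpos.mpr hr; omega⟩
      have := crit_rat (2 * a) (2 * r.den) (by omega)
      convert this using 1
      conv_lhs => rw [← Rat.num_div_den r, ha]
      have : (r.den : ℝ) ≠ 0 := by exact_mod_cast hd.ne'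
      push_cast
      field_simp
    · exact crit_inv n hn
    · exact crit_nat n hn
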